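/- Let α ∈ (0,1), p > 1 real, c > 0, and let φ be an even, nontrivial steady solution with speed c (for either nonlinearity, case abs or case sgn) that is monotonically increasing on (−π, 0). (a) If φ is continuously differentiable on ℝ, then φ′(x) > 0 and n′(φ(x)) < c for every x ∈ (−π, 0). (b) If in addition φ is twice continuously differentiable on a neighbourhood of 0 and on a neighbourhood of −π, then n′(φ(x)) < c for every x ∈ ℝ, φ″(0) < 0, and φ″(−π) > 0. (c) Conversely, if φ is merely continuous and satisfies n′(φ(x)) ≤ c for every x ∈ ℝ, then φ is strictly increasing on (−π, 0). -/

import Mathlib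

open Real MeasureTheory Set Filter Topology

/-- The periodic convolution kernel `K_α`: equal to the explicit integral
representation for `x ∉ 2πℤ` and to `0` on `2πℤ`. -/
noncomputable def Kker (α x : ℝ) : ℝ :=
  letI : Decidable (∃ k : ℤ, x = 2 * π * k) := Classical.propDecidable _
  if ∃ k : ℤ, x = 2 * π * k then 0
  else (1 / (π * Real.Gamma α)) *
    ∫ t in Set.Ioi (0:ℝ),
      t ^ (α - 1) * (Real.exp t * Real.cos x - 1) /
        (1 - 2 * Real.exp t * Real.cos x + Real.exp (2 * t))

/-- A steady travelling-wave solution of speed `c` with nonlinearity `n`: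
a continuous, `2π`-periodic, zero-mean function `φ` satisfying the steady
convolution equation. -/
def IsSteadySolution (α c : ℝ) (n φ : ℝ → ℝ) : Prop :=
  Continuous φ ∧ Function.Periodic φ (2 * π) ∧
  (∫ y in (-π)..π, φ y) = 0 ∧
  ∀ x : ℝ, (∫ y in (-π)..π, Kker α (x - y) * φ y) =
    c * φ x - n (φ x) + (1 / (2 * π)) * ∫ y in (-π)..π, n (φ y)

/-- Case abs nonlinearity `n(x) = |x|^p`. -/
noncomputable def nAbs (p x : ℝ) : ℝ := |x| ^ p
/-- Case sgn nonlinearity `n(x) = x·|x|^(p-1)`. -/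
noncomputable def nSgn (p x : ℝ) : ℝ := x * |x| ^ (p - 1)
/-- Derivative of the case abs nonlinearity, `n′(x) = p·x·|x|^(p-2)`. -/
noncomputable def nAbs' (p x : ℝ) : ℝ := p * x * |x| ^ (p - 2)
/-- Derivative of the case sgn nonlinearity, `n′(x) = p·|x|^(p-1)`. -/
noncomputable def nSgn' (p x : ℝ) : ℝ := p * |x| ^ (p - 1)

/-- The integrand of the kernel, without the weight. -/
noncomputable def Gk (t u : ℝ) : ℝ :=
  (Real.exp t * u - 1) / (1 - 2 * Real.exp t * u + Real.exp (2 * t))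

lemma Kker_of (α x : ℝ) (hx : cos x ≠ 1) :
    Kker α x = (1 / (π * Real.Gamma α)) * ∫ t in Set.Ioi (0:ℝ), t ^ (α - 1) * Gk t (cos x) := by
  have h : ¬ ∃ k : ℤ, x = 2 * π * k := by
    rintro ⟨k, hk⟩
    apply hx
    rw [Real.cos_eq_one_iff]
    exact ⟨k, by rw [hk]; ring⟩
  unfold Kker
  rw [if_neg h]
  simp only [Gk, mul_div_assoc]

lemma Kker_of_one (α x : ℝ) (hx : cos x = 1) : Kker α x = 0 := by
  have h : ∃ k : ℤ, x = 2 * π * k := by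
    rw [Real.cos_eq_one_iff] at hx
    obtain ⟨k, hk⟩ := hx
    exact ⟨k, by rw [← hk]; ring⟩
  unfold Kker
  rw [if_pos h]

lemma Kker_congr (α x y : ℝ) (h : cos x = cos y) : Kker α x = Kker α y := by
  by_cases hx : cos x = 1
  · rw [Kker_of_one α x hx, Kker_of_one α y (h ▸ hx)]
  · rw [Kker_of α x hx, Kker_of α y (h ▸ hx), h]

lemma D_eq (t u : ℝ) : 1 - 2 * Real.exp t * u + Real.exp (2 * t)
    = (Real.exp t - 1) ^ 2 + Real.exp t * (2 * (1 - u)) := by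
  rw [two_mul t, Real.exp_add]; ring

lemma Gk_bound (α t u : ℝ) (hα : α ∈ Set.Ioo (0:ℝ) 1) (ht : 0 < t) (hu : u ∈ Set.Ico (-1:ℝ) 1) :
    ‖t ^ (α - 1) * Gk t u‖ ≤
      (t ^ (α / 2 - 1) * Real.exp (-(1/2 - α/4) * t ^ (1:ℝ))) * (2 * (1 - u)) ^ (-(1/2 - α/4)) := by
  obtain ⟨h0, h1⟩ := hα
  obtain ⟨hu1, hu2⟩ := hu
  set D := 1 - 2 * Real.exp t * u + Real.exp (2 * t) with hD
  have hDe := D_eq t u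
  have het := Real.add_one_lt_exp ht.ne'
  have hep := Real.exp_pos t
  have hs : 0 < 2 * (1 - u) := by linarith
  have hD1 : t ^ 2 ≤ D := by
    rw [hD, hDe]
    have : t ^ 2 ≤ (Real.exp t - 1) ^ 2 := by
      apply pow_le_pow_left₀ ht.le; linarith
    nlinarith [mul_pos hep hs]
  have hD2 : Real.exp t * (2 * (1 - u)) ≤ D := by
    rw [hD, hDe]; nlinarith [sq_nonneg (Real.exp t - 1)]
  have hDpos : 0 < D := lt_of_lt_of_le (by positivity) hD1
  have hN : |Real.exp t * u - 1| ≤ D ^ (1/2 : ℝ) := by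
    rw [← Real.sqrt_eq_rpow]
    apply Real.abs_le_sqrt
    rw [hD, two_mul t, Real.exp_add]
    have : u ^ 2 ≤ 1 := by nlinarith
    nlinarith [mul_pos hep hep]
  have hG : |Gk t u| ≤ D ^ (-(1/2) : ℝ) := by
    unfold Gk
    rw [← hD, abs_div, abs_of_pos hDpos, div_le_iff₀ hDpos]
    calc _ ≤ _ := hN
      _ = D ^ (-(1/2) : ℝ) * D ^ (1:ℝ) := by
        rw [← Real.rpow_add hDpos]; norm_num
      _ = _ := by rw [Real.rpow_one]
  have hsplit : D ^ (-(1/2) : ℝ) = D ^ (-(α/4)) * D ^ (-(1/2 - α/4)) := by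
    rw [← Real.rpow_add hDpos]; congr 1; ring
  have e1 : D ^ (-(α/4)) ≤ t ^ (-(α/2)) := by
    calc D ^ (-(α/4)) ≤ (t ^ 2) ^ (-(α/4)) :=
          Real.rpow_le_rpow_of_nonpos (by positivity) hD1 (by linarith)
      _ = t ^ (-(α/2)) := by
          rw [← Real.rpow_natCast, ← Real.rpow_mul ht.le]; congr 1; push_cast; ring
  have e2 : D ^ (-(1/2 - α/4)) ≤ Real.exp (-(1/2 - α/4) * t) * (2 * (1 - u)) ^ (-(1/2 - α/4)) := by
    calc D ^ (-(1/2 - α/4)) ≤ (Real.exp t * (2 * (1 - u))) ^ (-(1/2 - α/4)) :=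
          Real.rpow_le_rpow_of_nonpos (by positivity) hD2 (by linarith)
      _ = _ := by
          rw [Real.mul_rpow hep.le hs.le, ← Real.exp_mul]; congr 2; ring
  rw [norm_mul, Real.norm_eq_abs, Real.norm_eq_abs, abs_of_pos (Real.rpow_pos_of_pos ht _), Real.rpow_one]
  calc t ^ (α - 1) * |Gk t u| ≤ t ^ (α - 1) * (t ^ (-(α/2)) *
        (Real.exp (-(1/2 - α/4) * t) * (2 * (1 - u)) ^ (-(1/2 - α/4)))) := by
        gcongr
        rw [hsplit] at hG
        refine hG.trans ?_
        gcongr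
    _ = (t ^ (α - 1) * t ^ (-(α/2))) *
        (Real.exp (-(1/2 - α/4) * t) * (2 * (1 - u)) ^ (-(1/2 - α/4))) := by ring
    _ = _ := by
      rw [← Real.rpow_add ht, ← mul_assoc]; congr 3; ring

lemma cos_Ico {x : ℝ} (hx : cos x ≠ 1) : cos x ∈ Set.Ico (-1:ℝ) 1 :=
  ⟨Real.neg_one_le_cos x, lt_of_le_of_ne (Real.cos_le_one x) hx⟩

lemma bound_int (α : ℝ) (hα : α ∈ Set.Ioo (0:ℝ) 1) :
    IntegrableOn (fun t : ℝ => t ^ (α / 2 - 1) * Real.exp (-(1/2 - α/4) * t ^ (1:ℝ))) (Ioi 0) := by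
  obtain ⟨h0, h1⟩ := hα
  exact integrableOn_rpow_mul_exp_neg_mul_rpow (by linarith) one_pos (by linarith)

lemma Gk_meas2 (α : ℝ) : Measurable (Function.uncurry
    (fun x t : ℝ => t ^ (α - 1) * Gk t (cos x))) := by
  unfold Gk Function.uncurry
  fun_prop

lemma Gk_int (α u : ℝ) (hα : α ∈ Set.Ioo (0:ℝ) 1) (hu : u ∈ Set.Ico (-1:ℝ) 1) :
    IntegrableOn (fun t : ℝ => t ^ (α - 1) * Gk t u) (Ioi 0) := by
  refine Integrable.mono' ((bound_int α hα).mul_const ((2 * (1 - u)) ^ (-(1/2 - α/4)))) ?_ ?_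
  · apply Measurable.aestronglyMeasurable
    unfold Gk; fun_prop
  · refine (ae_restrict_iff' measurableSet_Ioi).2 (Eventually.of_forall fun t ht => ?_)
    exact Gk_bound α t u hα ht hu

lemma Kker_meas (α : ℝ) : Measurable (Kker α) := by
  have h : Kker α = fun x => if cos x = 1 then 0 else
      (1 / (π * Real.Gamma α)) * ∫ t in Set.Ioi (0:ℝ), t ^ (α - 1) * Gk t (cos x) := by
    funext x
    split_ifs with hx
    · exact Kker_of_one α x hx
    · exact Kker_of α x hx
  rw [h]
  refine Measurable.ite ?_ measurable_const ?_
  · exact (Real.continuous_cos.measurable (measurableSet_singleton 1))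
  · exact ((Gk_meas2 α).stronglyMeasurable.integral_prod_right).measurable.const_mul _

lemma Kker_bound (α : ℝ) (hα : α ∈ Set.Ioo (0:ℝ) 1) : ∃ C : ℝ, ∀ x ∈ Set.Ioc (0:ℝ) π,
    ‖Kker α x‖ ≤ C * x ^ (α / 2 - 1) := by
  set B := ∫ t in Ioi (0:ℝ), t ^ (α / 2 - 1) * Real.exp (-(1/2 - α/4) * t ^ (1:ℝ)) with hB
  have hBn : 0 ≤ B := by
    apply setIntegral_nonneg measurableSet_Ioi
    intro t ht
    have : (0:ℝ) < t := ht
    positivity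
  refine ⟨|1 / (π * Real.Gamma α)| * (B * (4 / π ^ 2) ^ (-(1/2 - α/4))), fun x hx => ?_⟩
  have hx0 : 0 < x := hx.1
  have hcos : cos x ≤ 1 - 2 / π ^ 2 * x ^ 2 :=
    Real.cos_le_one_sub_mul_cos_sq (by rw [abs_of_pos hx.1]; exact hx.2)
  have hpos : 0 < 2 / π ^ 2 * x ^ 2 := by have := Real.pi_pos; positivity
  have hne : cos x ≠ 1 := by intro h; linarith
  rw [Kker_of α x hne, norm_mul, Real.norm_eq_abs, mul_assoc]
  refine mul_le_mul_of_nonneg_left ?_ (abs_nonneg _)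
  have h1 : ‖∫ t in Set.Ioi (0:ℝ), t ^ (α - 1) * Gk t (cos x)‖ ≤
      ∫ t in Ioi (0:ℝ), (t ^ (α / 2 - 1) * Real.exp (-(1/2 - α/4) * t ^ (1:ℝ))) *
        (2 * (1 - cos x)) ^ (-(1/2 - α/4)) := by
    refine norm_integral_le_of_norm_le ((bound_int α hα).mul_const _) ?_
    refine (ae_restrict_iff' measurableSet_Ioi).2 (Eventually.of_forall fun t ht => ?_)
    exact Gk_bound α t _ hα ht (cos_Ico hne)
  rw [integral_mul_const, ← hB] at h1
  refine h1.trans ?_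
  rw [mul_assoc]
  refine mul_le_mul_of_nonneg_left ?_ hBn
  calc (2 * (1 - cos x)) ^ (-(1/2 - α/4)) ≤ (4 / π ^ 2 * x ^ 2) ^ (-(1/2 - α/4)) := by
        refine Real.rpow_le_rpow_of_nonpos (by have := Real.pi_pos; positivity) ?_
          (by linarith [hα.2])
        have : 4 / π ^ 2 * x ^ 2 = 2 * (2 / π ^ 2 * x ^ 2) := by ring
        rw [this]; linarith
    _ = _ := by
      rw [Real.mul_rpow (by positivity) (by positivity), ← Real.rpow_natCast x 2,
        ← Real.rpow_mul hx0.le]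
      congr 2; push_cast; ring

lemma Kker_periodic (α : ℝ) : Function.Periodic (Kker α) (2 * π) := fun x =>
  Kker_congr α _ _ (Real.cos_add_two_pi x)

lemma Kker_intervalIntegrable (α : ℝ) (hα : α ∈ Set.Ioo (0:ℝ) 1) (a b : ℝ) :
    IntervalIntegrable (Kker α) volume a b := by
  obtain ⟨C, hC⟩ := Kker_bound α hα
  have h1 : IntervalIntegrable (Kker α) volume 0 π := by
    have h := (intervalIntegral.intervalIntegrable_rpow' (a := 0) (b := π) (r := α / 2 - 1)
      (by linarith [hα.1])).const_mul C
    refine h.mono_fun' (Kker_meas α).aestronglyMeasurable ?_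
    rw [uIoc_of_le Real.pi_pos.le]
    exact (ae_restrict_iff' measurableSet_Ioc).2 (Eventually.of_forall fun t ht => hC t ht)
  have h2 : IntervalIntegrable (Kker α) volume (-π) 0 := by
    have h := (IntervalIntegrable.iff_comp_neg (f := Kker α) (a := 0) (b := π)
      ).1 h1
    have e : (fun x => Kker α (-x)) = Kker α := by
      funext x; exact Kker_congr α _ _ (Real.cos_neg x)
    rw [e, neg_zero] at h
    exact h.symm
  have h3 := h2.trans h1
  refine (Kker_periodic α).intervalIntegrable (t := -π) (by have := Real.pi_pos; positivity) ?_ a b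
  convert h3 using 1; ring

/-- The weight in the quantitative monotonicity of the kernel. -/
noncomputable def wk (α t : ℝ) : ℝ :=
  t ^ (α - 1) * (Real.exp t * (Real.exp (2 * t) - 1) / (1 + Real.exp t) ^ 4)

lemma wk_pos (α t : ℝ) (ht : 0 < t) : 0 < wk α t := by
  unfold wk
  have : 0 < Real.exp (2 * t) - 1 := by
    have := Real.add_one_lt_exp (x := 2 * t) (by positivity); linarith
  positivity

lemma wk_int (α : ℝ) (hα : α ∈ Set.Ioo (0:ℝ) 1) : IntegrableOn (wk α) (Ioi 0) := by
  have h := integrableOn_rpow_mul_exp_neg_mul_rpow (s := α - 1) (p := 1) (b := 1)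
    (by linarith [hα.1]) one_pos one_pos
  refine Integrable.mono' h ?_ ?_
  · apply Measurable.aestronglyMeasurable
    unfold wk; fun_prop
  · refine (ae_restrict_iff' measurableSet_Ioi).2 (Eventually.of_forall fun t ht => ?_)
    have ht0 : (0:ℝ) < t := ht
    rw [Real.norm_eq_abs, abs_of_pos (wk_pos α t ht0), Real.rpow_one]
    unfold wk
    refine mul_le_mul_of_nonneg_left ?_ (by positivity)
    rw [div_le_iff₀ (by positivity), neg_one_mul, Real.exp_neg, inv_mul_eq_div,
      le_div_iff₀ (Real.exp_pos t), two_mul, Real.exp_add]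
    have := Real.exp_pos t
    set e := Real.exp t
    have h2 := pow_pos this 2
    have h3 := pow_pos this 3
    nlinarith

lemma Gk_diff (t u v : ℝ) (ht : 0 < t) (hu : u ∈ Set.Ico (-1:ℝ) 1) (hv : v ∈ Set.Ico (-1:ℝ) 1)
    (huv : u ≤ v) :
    (v - u) * (Real.exp t * (Real.exp (2 * t) - 1) / (1 + Real.exp t) ^ 4) ≤ Gk t v - Gk t u := by
  have key : ∀ w ∈ Set.Ico (-1:ℝ) 1, 0 < 1 - 2 * Real.exp t * w + Real.exp (2 * t) ∧
      1 - 2 * Real.exp t * w + Real.exp (2 * t) ≤ (1 + Real.exp t) ^ 2 := by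
    intro w hw
    constructor
    · rw [D_eq]
      have : 0 < 1 - w := by linarith [hw.2]
      have := Real.exp_pos t
      positivity
    · rw [two_mul t, Real.exp_add]
      nlinarith [Real.exp_pos t, hw.1]
  obtain ⟨u1, u2⟩ := key u hu
  obtain ⟨v1, v2⟩ := key v hv
  have hE : 0 < Real.exp (2 * t) - 1 := by
    have := Real.add_one_lt_exp (x := 2 * t) (by positivity); linarith
  have e : Gk t v - Gk t u = (v - u) * (Real.exp t * (Real.exp (2 * t) - 1) /
      ((1 - 2 * Real.exp t * v + Real.exp (2 * t)) * (1 - 2 * Real.exp t * u + Real.exp (2 * t)))) := by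
    unfold Gk
    rw [div_sub_div _ _ v1.ne' u1.ne', ← mul_div_assoc]
    congr 1; ring
  rw [e]
  refine mul_le_mul_of_nonneg_left ?_ (by linarith)
  refine div_le_div_of_nonneg_left (by positivity) (by positivity) ?_
  calc _ ≤ (1 + Real.exp t) ^ 2 * (1 + Real.exp t) ^ 2 := by gcongr
    _ = _ := by ring

lemma Kker_mono (α : ℝ) (hα : α ∈ Set.Ioo (0:ℝ) 1) : ∃ κ : ℝ, 0 < κ ∧ ∀ u v : ℝ,
    cos u ≠ 1 → cos v ≠ 1 → cos u ≤ cos v →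
    Kker α u - κ * cos u ≤ Kker α v - κ * cos v := by
  have hG : 0 < 1 / (π * Real.Gamma α) := by
    have := Real.Gamma_pos_of_pos hα.1
    have := Real.pi_pos
    positivity
  refine ⟨(1 / (π * Real.Gamma α)) * ∫ t in Ioi (0:ℝ), wk α t, ?_, ?_⟩
  · refine mul_pos hG ?_
    rw [setIntegral_pos_iff_support_of_nonneg_ae _ (wk_int α hα)]
    · have : Ioi (0:ℝ) ⊆ Function.support (wk α) ∩ Ioi 0 :=
        fun t ht => ⟨(wk_pos α t ht).ne', ht⟩
      refine lt_of_lt_of_le ?_ (measure_mono this)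
      simp
    · exact (ae_restrict_iff' measurableSet_Ioi).2 (Eventually.of_forall fun t ht => (wk_pos α t ht).le)
  · intro u v hu hv huv
    rw [Kker_of α u hu, Kker_of α v hv]
    have h : (∫ t in Ioi (0:ℝ), (cos v - cos u) * wk α t) ≤
        ∫ t in Ioi (0:ℝ), (t ^ (α - 1) * Gk t (cos v) - t ^ (α - 1) * Gk t (cos u)) := by
      refine setIntegral_mono_on ((wk_int α hα).const_mul _)
        ((Gk_int α _ hα (cos_Ico hv)).sub (Gk_int α _ hα (cos_Ico hu))) measurableSet_Ioi ?_
      intro t ht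
      have ht0 : (0:ℝ) < t := ht
      have := mul_le_mul_of_nonneg_left (Gk_diff t _ _ ht (cos_Ico hu) (cos_Ico hv) huv)
        (Real.rpow_pos_of_pos ht0 (α - 1)).le
      unfold wk
      linarith
    rw [integral_const_mul, integral_sub (Gk_int α _ hα (cos_Ico hv)) (Gk_int α _ hα (cos_Ico hu))] at h
    have := mul_le_mul_of_nonneg_left h hG.le
    linarith

lemma ae_cos_ne_one (a : ℝ) : ∀ᵐ y : ℝ, cos (a - y) ≠ 1 := by
  have hc : (Set.range (fun k : ℤ => a - k * (2 * π))).Countable := Set.countable_range _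
  filter_upwards [hc.ae_notMem volume] with y hy h
  apply hy
  rw [Real.cos_eq_one_iff] at h
  obtain ⟨k, hk⟩ := h
  exact ⟨k, by simp only [hk]; ring⟩

lemma comp_sub_int {k : ℝ → ℝ} (hkI : ∀ a b, IntervalIntegrable k volume a b) (a b c : ℝ) :
    IntervalIntegrable (fun y => k (a - y)) volume b c := by
  have h := (hkI (a - b) (a - c)).comp_sub_left a
  simpa using h

lemma conv_mono (k f : ℝ → ℝ) (hk : ∀ a b, cos a = cos b → k a = k b)
    (hkI : ∀ a b, IntervalIntegrable k volume a b)
    (hkm : ∀ u v, cos u ≠ 1 → cos v ≠ 1 → cos u ≤ cos v → k u ≤ k v)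
    (hfc : Continuous f) (hf : ∀ u v, cos u ≤ cos v → f u ≤ f v)
    (x h : ℝ) (hx : sin x ≤ 0) (hh : 0 ≤ sin h) :
    (∫ y in (-π)..π, k (x - h - y) * f y) ≤ ∫ y in (-π)..π, k (x + h - y) * f y := by
  set d : ℝ → ℝ := fun y => k (x + h - y) - k (x - h - y) with hd
  have hfe : ∀ u v, cos u = cos v → f u = f v := fun u v e =>
    le_antisymm (hf u v e.le) (hf v u e.ge)
  have hdref : ∀ y, d (2 * x - y) = - d y := by
    intro y
    simp only [hd]
    rw [hk (x + h - (2 * x - y)) (x - h - y) (by rw [← Real.cos_neg]; congr 1; ring),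
      hk (x - h - (2 * x - y)) (x + h - y) (by rw [← Real.cos_neg]; congr 1; ring)]
    ring
  have hdint : ∀ a b, IntervalIntegrable d volume a b := fun a b =>
    (comp_sub_int hkI _ a b).sub (comp_sub_int hkI _ a b)
  have hdper : Function.Periodic (fun y => d y * f y) (2 * π) := by
    intro y
    simp only [hd]
    rw [hfe (y + 2 * π) y (Real.cos_add_two_pi y),
      hk (x + h - (y + 2 * π)) (x + h - y) (by rw [← sub_sub, Real.cos_sub_two_pi]),
      hk (x - h - (y + 2 * π)) (x - h - y) (by rw [← sub_sub, Real.cos_sub_two_pi])]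
  have hI : (∫ y in (-π)..π, d y * f y) = ∫ y in (-π)..π, d (2 * x - y) * f (2 * x - y) := by
    rw [intervalIntegral.integral_comp_sub_left (fun y => d y * f y) (2 * x)]
    have := hdper.intervalIntegral_add_eq (-π) (2 * x - π)
    rw [show -π + 2 * π = π by ring, show 2 * x - π + 2 * π = 2 * x - -π by ring] at this
    exact this
  have hfi : ∀ y, d (2 * x - y) * f (2 * x - y) = - (d y * f (2 * x - y)) := by
    intro y; rw [hdref]; ring
  simp_rw [hfi] at hI
  rw [intervalIntegral.integral_neg] at hI
  have i1 : IntervalIntegrable (fun y => d y * f y) volume (-π) π :=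
    (hdint _ _).mul_continuousOn hfc.continuousOn
  have i2 : IntervalIntegrable (fun y => d y * f (2 * x - y)) volume (-π) π :=
    (hdint _ _).mul_continuousOn (by fun_prop)
  have hpos : 0 ≤ ∫ y in (-π)..π, (d y * f y - d y * f (2 * x - y)) := by
    refine intervalIntegral.integral_nonneg_of_ae (by linarith [Real.pi_pos]) ?_
    filter_upwards [ae_cos_ne_one (x + h), ae_cos_ne_one (x - h)] with y h1 h2
    simp only [Pi.zero_apply, hd]
    rw [← mul_sub]
    have c1 : cos (x + h - y) - cos (x - h - y) = -2 * sin (x - y) * sin h := by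
      rw [Real.cos_sub_cos]; congr 2 <;> congr 1 <;> [skip; skip] <;> ring_nf
    have c2 : cos y - cos (2 * x - y) = 2 * sin x * sin (x - y) := by
      rw [Real.cos_sub_cos, show (y + (2 * x - y)) / 2 = x by ring,
        show (y - (2 * x - y)) / 2 = -(x - y) by ring, Real.sin_neg]
      ring
    rcases le_total 0 (sin (x - y)) with hs | hs
    · have a1 : k (x + h - y) ≤ k (x - h - y) := hkm _ _ h1 h2 (by nlinarith [mul_nonneg hs hh])
      have a2 : f y ≤ f (2 * x - y) := hf _ _ (by nlinarith [mul_nonneg (neg_nonneg.2 hx) hs])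
      nlinarith
    · have a1 : k (x - h - y) ≤ k (x + h - y) :=
        hkm _ _ h2 h1 (by nlinarith [mul_nonneg (neg_nonneg.2 hs) hh])
      have a2 : f (2 * x - y) ≤ f y :=
        hf _ _ (by nlinarith [mul_nonneg (neg_nonneg.2 hx) (neg_nonneg.2 hs)])
      exact mul_nonneg (by linarith) (by linarith)
  rw [intervalIntegral.integral_sub i1 i2] at hpos
  have h0 : 0 ≤ ∫ y in (-π)..π, d y * f y := by linarith
  have e : (∫ y in (-π)..π, d y * f y) =
      (∫ y in (-π)..π, k (x + h - y) * f y) - ∫ y in (-π)..π, k (x - h - y) * f y := by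
    rw [← intervalIntegral.integral_sub]
    · simp only [hd, sub_mul]
    · exact (comp_sub_int hkI _ _ _).mul_continuousOn hfc.continuousOn
    · exact (comp_sub_int hkI _ _ _).mul_continuousOn hfc.continuousOn
  linarith

lemma cos_mono_of (φ : ℝ → ℝ) (hc : Continuous φ) (hper : Function.Periodic φ (2 * π))
    (heven : ∀ x, φ (-x) = φ x) (hmono : MonotoneOn φ (Set.Ioo (-π) 0)) (u v : ℝ)
    (huv : cos u ≤ cos v) : φ u ≤ φ v := by
  have red : ∀ u, φ u = φ (-arccos (cos u)) := by
    intro u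
    have h : cos (-arccos (cos u)) = cos u := by
      rw [Real.cos_neg, Real.cos_arccos (Real.neg_one_le_cos u) (Real.cos_le_one u)]
    rw [Real.cos_eq_cos_iff] at h
    obtain ⟨k, hk⟩ := h
    have hp : ∀ z, φ (2 * k * π + z) = φ z := by
      intro z
      have := hper.int_mul k z
      rw [← this]; congr 1; ring
    rcases hk with hk | hk
    · conv_lhs => rw [hk, hp]
    · conv_lhs => rw [hk, sub_eq_add_neg, hp, heven]
  have mono : ∀ a b, -π ≤ a → a ≤ b → b ≤ 0 → φ a ≤ φ b := by
    intro a b ha hab hb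
    have pp := Real.pi_pos
    have t : ∀ z, Tendsto (fun s : ℝ => φ (s * (-π/2) + (1 - s) * z)) (𝓝[>] 0) (𝓝 (φ z)) := by
      intro z
      have : Continuous (fun s : ℝ => φ (s * (-π/2) + (1 - s) * z)) := by fun_prop
      have h := (this.tendsto 0).mono_left (nhdsWithin_le_nhds (s := Ioi 0))
      simpa using h
    refine le_of_tendsto_of_tendsto (t a) (t b) ?_
    have : Ioo (0:ℝ) 1 ∈ 𝓝[>] (0:ℝ) := Ioo_mem_nhdsGT one_pos
    filter_upwards [this] with s hs
    have hs1 : 0 < 1 - s := by linarith [hs.2]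
    have mem : ∀ z, -π ≤ z → z ≤ 0 → s * (-π/2) + (1 - s) * z ∈ Ioo (-π) 0 := by
      intro z h1 h2
      constructor <;> nlinarith [mul_pos hs.1 pp, mul_nonneg hs1.le (sub_nonneg.2 h1),
        mul_nonneg hs1.le (sub_nonneg.2 h2)]
    refine hmono (mem a ha (hab.trans hb)) (mem b (ha.trans hab) hb) ?_
    nlinarith
  rw [red u, red v]
  have := Real.arccos_le_arccos huv
  exact mono _ _ (by linarith [Real.arccos_le_pi (cos u)]) (by linarith)
    (by linarith [Real.arccos_nonneg (cos v)])

lemma J_pos (φ : ℝ → ℝ) (hc : Continuous φ) (hf : ∀ u v, cos u ≤ cos v → φ u ≤ φ v)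
    (h0 : (∫ y in (-π)..π, φ y) = 0) (hnt : ∃ x, φ x ≠ 0) :
    0 < ∫ y in (-π)..π, cos y * φ y := by
  have pp := Real.pi_pos
  set A := φ (π / 2) with hA
  have hsign : ∀ y, 0 ≤ cos y * (φ y - A) := by
    intro y
    rcases le_total 0 (cos y) with h | h
    · exact mul_nonneg h (sub_nonneg.2 (hf _ _ (by rw [Real.cos_pi_div_two]; exact h)))
    · exact mul_nonneg_of_nonpos_of_nonpos h
        (sub_nonpos.2 (hf _ _ (by rw [Real.cos_pi_div_two]; exact h)))
  have e : (∫ y in (-π)..π, cos y * (φ y - A)) = ∫ y in (-π)..π, cos y * φ y := by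
    simp_rw [mul_sub]
    rw [intervalIntegral.integral_sub ((by fun_prop : Continuous _).intervalIntegrable _ _)
      ((by fun_prop : Continuous _).intervalIntegrable _ _)]
    simp
  rw [← e]
  refine intervalIntegral.integral_pos (by linarith) (by fun_prop) (fun y _ => hsign y) ?_
  by_contra hno
  push Not at hno
  have hle : ∀ y ∈ Icc (-π) π, cos y * (φ y - A) = 0 := fun y hy => le_antisymm (hno y hy) (hsign y)
  have c0 : φ 0 = A := by
    have := hle 0 ⟨by linarith, by linarith⟩
    rw [Real.cos_zero] at this; linarith
  have c1 : φ π = A := by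
    have := hle π ⟨by linarith, le_rfl⟩
    rw [Real.cos_pi] at this; linarith
  have hconst : ∀ y, φ y = A := fun y => le_antisymm
    (c0 ▸ hf y 0 (by rw [Real.cos_zero]; exact Real.cos_le_one y))
    (c1 ▸ hf π y (by rw [Real.cos_pi]; exact Real.neg_one_le_cos y))
  obtain ⟨x, hx⟩ := hnt
  simp_rw [hconst] at h0
  rw [intervalIntegral.integral_const, smul_eq_mul] at h0
  rcases mul_eq_zero.1 h0 with h | h
  · linarith
  · exact hx ((hconst x).trans h)

lemma main_mono (α c : ℝ) (hα : α ∈ Set.Ioo (0:ℝ) 1)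
    (n φ : ℝ → ℝ) (hφ : IsSteadySolution α c n φ)
    (hnt : ∃ x, φ x ≠ 0) (heven : ∀ x, φ (-x) = φ x)
    (hmono : MonotoneOn φ (Set.Ioo (-π) 0)) :
    ∃ m : ℝ, 0 < m ∧ MonotoneOn (fun z => c * φ z - n (φ z) - m * cos z) (Set.Ioo (-π) 0) := by
  obtain ⟨hc, hper, h0, heq⟩ := hφ
  have hf := cos_mono_of φ hc hper heven hmono
  have hJ := J_pos φ hc hf h0 hnt
  obtain ⟨κ, hκ, hK⟩ := Kker_mono α hα
  set J := ∫ y in (-π)..π, cos y * φ y with hJd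
  refine ⟨κ * J, mul_pos hκ hJ, ?_⟩
  intro a ha b hb hab
  set k : ℝ → ℝ := fun y => Kker α y - κ * cos y with hk
  have hcosint : ∀ a b, IntervalIntegrable (fun y => κ * cos y) volume a b := fun a b =>
    (by fun_prop : Continuous _).intervalIntegrable _ _
  have hkI : ∀ a b, IntervalIntegrable k volume a b := fun a b =>
    (Kker_intervalIntegrable α hα a b).sub (hcosint a b)
  have h := conv_mono k φ (fun a b e => by simp only [hk]; rw [Kker_congr α a b e, e]) hkI
    (fun u v hu hv huv => hK u v hu hv huv) hc hf ((a + b) / 2) ((b - a) / 2)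
    (Real.sin_nonpos_of_nonpos_of_neg_pi_le (by linarith [ha.2, hb.2]) (by linarith [ha.1, hb.1]))
    (Real.sin_nonneg_of_nonneg_of_le_pi (by linarith) (by linarith [ha.1, hb.2, Real.pi_pos]))
  rw [show (a + b) / 2 - (b - a) / 2 = a by ring, show (a + b) / 2 + (b - a) / 2 = b by ring] at h
  have hsin : (∫ y in (-π)..π, sin y * φ y) = 0 := by
    have e := intervalIntegral.integral_comp_neg (a := -π) (b := π) (fun y => sin y * φ y)
    simp only [Real.sin_neg, heven, neg_neg, neg_mul] at e
    rw [intervalIntegral.integral_neg] at e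
    linarith
  have hcos : ∀ x, (∫ y in (-π)..π, cos (x - y) * φ y) = cos x * J := by
    intro x
    have : ∀ y, cos (x - y) * φ y = cos x * (cos y * φ y) + sin x * (sin y * φ y) := by
      intro y; rw [Real.cos_sub]; ring
    simp_rw [this]
    rw [intervalIntegral.integral_add ((by fun_prop : Continuous _).intervalIntegrable _ _)
      ((by fun_prop : Continuous _).intervalIntegrable _ _),
      intervalIntegral.integral_const_mul, intervalIntegral.integral_const_mul, hsin]
    ring
  have hval : ∀ x, (∫ y in (-π)..π, k (x - y) * φ y) =
      (c * φ x - n (φ x) + (1 / (2 * π)) * ∫ y in (-π)..π, n (φ y)) - κ * (cos x * J) := by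
    intro x
    have : ∀ y, k (x - y) * φ y = Kker α (x - y) * φ y - κ * (cos (x - y) * φ y) := by
      intro y; simp only [hk]; ring
    simp_rw [this]
    rw [intervalIntegral.integral_sub
      ((comp_sub_int (Kker_intervalIntegrable α hα) _ _ _).mul_continuousOn hc.continuousOn)
      ((by fun_prop : Continuous _).intervalIntegrable _ _),
      intervalIntegral.integral_const_mul, hcos, heq]
  rw [hval, hval] at h
  simp only
  linarith

lemma nAbs_deriv (p : ℝ) (hp : 1 < p) (x : ℝ) : HasDerivAt (nAbs p) (nAbs' p x) x := by
  have := hasDerivAt_abs_rpow x hp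
  unfold nAbs nAbs'
  convert this using 1
  ring

lemma nAbs'_cont (p : ℝ) (hp : 1 < p) : Continuous (nAbs' p) := by
  have h : ContDiff ℝ 1 (nAbs p) := contDiff_norm_rpow (E := ℝ) hp
  have e : deriv (nAbs p) = nAbs' p := funext fun x => (nAbs_deriv p hp x).deriv
  rw [← e]
  exact h.continuous_deriv le_rfl

lemma nSgn'_cont (p : ℝ) (hp : 1 < p) : Continuous (nSgn' p) := by
  unfold nSgn'
  exact continuous_const.mul (continuous_abs.rpow_const fun x => Or.inr (by linarith))

lemma nSgn_deriv (p : ℝ) (hp : 1 < p) (x : ℝ) : HasDerivAt (nSgn p) (nSgn' p x) x := by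
  rcases lt_trichotomy x 0 with hx | hx | hx
  · have h : HasDerivAt (fun y : ℝ => -((-y) ^ p)) (nSgn' p x) x := by
      have := ((hasDerivAt_neg x).rpow_const (p := p) (Or.inr hp.le)).neg
      unfold nSgn'
      rw [abs_of_neg hx]
      refine this.congr_deriv ?_
      ring
    refine h.congr_of_eventuallyEq ?_
    filter_upwards [Iio_mem_nhds hx] with y hy
    have hy0 : 0 < -y := by linarith [mem_Iio.1 hy]
    unfold nSgn
    have hy1 : y ≠ 0 := (mem_Iio.1 hy).ne
    rw [abs_of_neg hy, Real.rpow_sub hy0, Real.rpow_one]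
    field_simp
  · subst hx
    have h1 : nSgn' p 0 = 0 := by
      unfold nSgn'; rw [abs_zero, Real.zero_rpow (by linarith)]; ring
    rw [h1, hasDerivAt_iff_tendsto_slope]
    have hcont : Continuous fun y : ℝ => |y| ^ (p - 1) :=
      continuous_abs.rpow_const fun x => Or.inr (by linarith)
    have ht := (hcont.tendsto 0).mono_left (nhdsWithin_le_nhds (s := {0}ᶜ))
    rw [abs_zero, Real.zero_rpow (by linarith)] at ht
    refine ht.congr' ?_
    filter_upwards [self_mem_nhdsWithin] with y hy
    have : y ≠ 0 := hy
    rw [slope_def_field]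
    unfold nSgn
    field_simp
    simp
  · have h : HasDerivAt (fun y : ℝ => y ^ p) (nSgn' p x) x := by
      have := Real.hasDerivAt_rpow_const (x := x) (p := p) (Or.inr hp.le)
      unfold nSgn'
      rwa [abs_of_pos hx]
    refine h.congr_of_eventuallyEq ?_
    filter_upwards [Ioi_mem_nhds hx] with y hy
    have hy0 : 0 < y := hy
    unfold nSgn
    rw [abs_of_pos hy0, Real.rpow_sub hy0, Real.rpow_one]
    field_simp
/-- Nodal pattern for even, nontrivial steady solutions increasing
on `(−π, 0)`:
(a) if `φ ∈ C¹`, then `φ′ > 0` and `n′(φ) < c` on `(−π,0)`;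
(b) if additionally `φ` is `C²` near `0` and near `−π`, then `n′(φ) < c` everywhere,
    `φ″(0) < 0` and `φ″(−π) > 0`;
(c) conversely, if `φ` is merely continuous and `n′(φ) ≤ c` everywhere, then `φ` is
    strictly increasing on `(−π, 0)`. -/
theorem statement12 (α p c : ℝ) (hα : α ∈ Set.Ioo (0:ℝ) 1) (hp : 1 < p) (hc : 0 < c)
    (n n' : ℝ → ℝ)
    (hn : (n = nAbs p ∧ n' = nAbs' p) ∨ (n = nSgn p ∧ n' = nSgn' p))
    (φ : ℝ → ℝ) (hφ : IsSteadySolution α c n φ)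
    (hnt : ∃ x, φ x ≠ 0) (heven : ∀ x, φ (-x) = φ x)
    (hmono : MonotoneOn φ (Set.Ioo (-π) 0)) :
    (ContDiff ℝ 1 φ → ∀ x ∈ Set.Ioo (-π) 0, 0 < deriv φ x ∧ n' (φ x) < c) ∧
    (ContDiff ℝ 1 φ →
      (∃ U : Set ℝ, IsOpen U ∧ (0:ℝ) ∈ U ∧ ContDiffOn ℝ 2 φ U) →
      (∃ V : Set ℝ, IsOpen V ∧ -π ∈ V ∧ ContDiffOn ℝ 2 φ V) →
      (∀ x : ℝ, n' (φ x) < c) ∧ deriv (deriv φ) 0 < 0 ∧ 0 < deriv (deriv φ) (-π)) ∧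
    ((∀ x : ℝ, n' (φ x) ≤ c) → StrictMonoOn φ (Set.Ioo (-π) 0)) := by
  have pp := Real.pi_pos
  have hnd : ∀ x, HasDerivAt n (n' x) x := by
    rcases hn with ⟨rfl, rfl⟩ | ⟨rfl, rfl⟩
    · exact nAbs_deriv p hp
    · exact nSgn_deriv p hp
  have hnc : Continuous n' := by
    rcases hn with ⟨rfl, rfl⟩ | ⟨rfl, rfl⟩
    · exact nAbs'_cont p hp
    · exact nSgn'_cont p hp
  obtain ⟨m, hm, hQ⟩ := main_mono α c hα n φ hφ hnt heven hmono
  obtain ⟨hcont, hper, -, -⟩ := hφ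
  have hf := cos_mono_of φ hcont hper heven hmono
  have key : ContDiff ℝ 1 φ → ∀ x ∈ Set.Ioo (-π) 0,
      m * (-sin x) ≤ (c - n' (φ x)) * deriv φ x := by
    intro hC x hx
    have hd : HasDerivAt φ (deriv φ x) x :=
      ((hC.differentiable one_ne_zero) x).hasDerivAt
    have hq : HasDerivAt (fun z => c * φ z - n (φ z) - m * cos z)
        (c * deriv φ x - n' (φ x) * deriv φ x - m * (-sin x)) x :=
      ((hd.const_mul c).sub ((hnd (φ x)).comp x hd)).sub ((Real.hasDerivAt_cos x).const_mul m)
    have h := hQ.derivWithin_nonneg (x := x)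
    rw [derivWithin_of_isOpen isOpen_Ioo hx, hq.deriv] at h
    linarith
  have hsin : ∀ x ∈ Set.Ioo (-π) 0, 0 < -sin x := fun x hx =>
    neg_pos.2 (Real.sin_neg_of_neg_of_neg_pi_lt hx.2 hx.1)
  have partA : ContDiff ℝ 1 φ → ∀ x ∈ Set.Ioo (-π) 0, 0 < deriv φ x ∧ n' (φ x) < c := by
    intro hC x hx
    have h := (mul_pos hm (hsin x hx)).trans_le (key hC x hx)
    have hge : 0 ≤ deriv φ x := by
      have := hmono.derivWithin_nonneg (x := x)
      rwa [derivWithin_of_isOpen isOpen_Ioo hx] at this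
    have h1 : 0 < deriv φ x := lt_of_le_of_ne hge (fun e => by rw [← e] at h; simp at h)
    have h2 := pos_of_mul_pos_left h hge
    exact ⟨h1, by linarith⟩
  refine ⟨partA, ?_, ?_⟩
  · rintro hC ⟨U, hU, h0U, hCU⟩ ⟨V, hV, hpV, hCV⟩
    have hd1 : ∀ (W : Set ℝ) (a : ℝ), IsOpen W → a ∈ W → ContDiffOn ℝ 2 φ W →
        HasDerivAt (deriv φ) (deriv (deriv φ) a) a := by
      intro W a hW ha hCW
      have h : ContDiffOn ℝ 1 (deriv φ) W := hCW.deriv_of_isOpen hW (by norm_num)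
      exact ((h.differentiableOn one_ne_zero).differentiableAt (hW.mem_nhds ha)).hasDerivAt
    have dodd : ∀ x, deriv φ (-x) = - deriv φ x := by
      intro x
      have h := deriv_comp_neg φ x
      have e : (fun x => φ (-x)) = φ := funext heven
      rw [e] at h
      linarith
    have d0 : deriv φ 0 = 0 := by
      have := dodd 0; rw [neg_zero] at this; linarith
    have dpi : deriv φ (-π) = 0 := by
      have h1 := dodd π
      have h2 : deriv φ (-π + 2 * π) = deriv φ (-π) := by
        rw [← deriv_comp_add_const]
        congr 1; funext x; exact hper x
      rw [show -π + 2 * π = π by ring] at h2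
      linarith
    have hN : Continuous fun x => n' (φ x) := hnc.comp hcont
    have i0 : Set.Ioo (-π) 0 ∈ 𝓝[<] (0:ℝ) := Ioo_mem_nhdsLT (by linarith)
    have i1 : Set.Ioo (-π) 0 ∈ 𝓝[>] (-π) := Ioo_mem_nhdsGT (by linarith)
    have l0 : n' (φ 0) ≤ c := by
      refine le_of_tendsto ((hN.tendsto 0).mono_left (nhdsWithin_le_nhds (s := Set.Iio 0))) ?_
      filter_upwards [i0] with x hx using (partA hC x hx).2.le
    have l1 : n' (φ (-π)) ≤ c := by
      refine le_of_tendsto ((hN.tendsto (-π)).mono_left (nhdsWithin_le_nhds (s := Set.Ioi (-π)))) ?_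
      filter_upwards [i1] with x hx using (partA hC x hx).2.le
    have s0 : (c - n' (φ 0)) * deriv (deriv φ) 0 ≤ -m := by
      have t1 := ((hasDerivAt_iff_tendsto_slope.1 (hd1 U 0 hU h0U hCU)).mono_left
        (nhdsWithin_mono 0 (show Set.Iio (0:ℝ) ⊆ {0}ᶜ from fun y hy => (mem_Iio.1 hy).ne)))
      have t2 := ((hasDerivAt_iff_tendsto_slope.1 (Real.hasDerivAt_sin 0)).mono_left
        (nhdsWithin_mono 0 (show Set.Iio (0:ℝ) ⊆ {0}ᶜ from fun y hy => (mem_Iio.1 hy).ne)))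
      have t3 := ((hN.tendsto 0).mono_left (nhdsWithin_le_nhds (s := Set.Iio 0))).const_sub c
      have t4 := t2.const_mul (-m)
      rw [Real.cos_zero, mul_one] at t4
      refine le_of_tendsto_of_tendsto (t3.mul t1) t4 ?_
      filter_upwards [i0] with x hx
      have hk := key hC x hx
      rw [slope_def_field, slope_def_field, d0, Real.sin_zero, sub_zero, sub_zero, sub_zero,
        ← mul_div_assoc, ← mul_div_assoc]
      exact div_le_div_of_nonpos_of_le hx.2.le (by linarith)
    have s1 : m ≤ (c - n' (φ (-π))) * deriv (deriv φ) (-π) := by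
      have t1 := ((hasDerivAt_iff_tendsto_slope.1 (hd1 V (-π) hV hpV hCV)).mono_left
        (nhdsWithin_mono (-π) (show Set.Ioi (-π) ⊆ {-π}ᶜ from fun y hy => (mem_Ioi.1 hy).ne')))
      have t2 := ((hasDerivAt_iff_tendsto_slope.1 (Real.hasDerivAt_sin (-π))).mono_left
        (nhdsWithin_mono (-π) (show Set.Ioi (-π) ⊆ {-π}ᶜ from fun y hy => (mem_Ioi.1 hy).ne')))
      have t3 := ((hN.tendsto (-π)).mono_left (nhdsWithin_le_nhds (s := Set.Ioi (-π)))).const_sub c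
      have t4 := t2.const_mul (-m)
      rw [Real.cos_neg, Real.cos_pi, neg_mul_neg, mul_one] at t4
      refine le_of_tendsto_of_tendsto t4 (t3.mul t1) ?_
      filter_upwards [i1] with x hx
      have hk := key hC x hx
      rw [slope_def_field, slope_def_field, dpi, Real.sin_neg, Real.sin_pi, neg_zero, sub_zero,
        sub_zero, ← mul_div_assoc, ← mul_div_assoc]
      exact div_le_div_of_nonneg_right (by linarith) (by linarith [hx.1])
    have k0 : n' (φ 0) < c := by
      refine lt_of_le_of_ne l0 fun e => ?_
      rw [e, sub_self, zero_mul] at s0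
      linarith
    have k1 : n' (φ (-π)) < c := by
      refine lt_of_le_of_ne l1 fun e => ?_
      rw [e, sub_self, zero_mul] at s1
      linarith
    refine ⟨fun x => ?_, ?_, ?_⟩
    · have hcx : cos (-arccos (cos x)) = cos x := by
        rw [Real.cos_neg, Real.cos_arccos (Real.neg_one_le_cos x) (Real.cos_le_one x)]
      have e : φ x = φ (-arccos (cos x)) := le_antisymm (hf _ _ hcx.ge) (hf _ _ hcx.le)
      rw [e]
      have b1 := Real.arccos_le_pi (cos x)
      have b2 := Real.arccos_nonneg (cos x)
      rcases b1.eq_or_lt with b1 | b1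
      · rw [b1]; exact k1
      rcases b2.eq_or_lt with b2 | b2
      · rw [← b2, neg_zero]; exact k0
      exact (partA hC _ ⟨by linarith, by linarith⟩).2
    · by_contra hcon
      nlinarith [mul_nonneg (sub_nonneg.2 l0) (not_lt.1 hcon)]
    · by_contra hcon
      nlinarith [mul_nonneg (sub_nonneg.2 l1) (neg_nonneg.2 (not_lt.1 hcon))]
  · intro _ a ha b hb hab
    refine lt_of_le_of_ne (hmono ha hb hab.le) ?_
    intro e
    have h := hQ ha hb hab.le
    simp only [e] at h
    have hcos : cos a < cos b := by
      rw [← Real.cos_neg a, ← Real.cos_neg b]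
      exact Real.cos_lt_cos_of_nonneg_of_le_pi (by linarith [hb.2]) (by linarith [ha.1]) (by linarith)
    nlinarith
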